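/- Let A be an associative unital k-algebra equipped with an exhaustive increasing filtration by finite-dimensional k-subspaces F_0 ⊆ F_1 ⊆ F_2 ⊆ ⋯ with 1 ∈ F_0, F_i·F_j ⊆ F_{i+j}, and ⋃_i F_i = A, and let gr A = ⊕_{i≥0} F_i/F_{i−1} (with F_{−1} = 0) be the associated graded algebra with multiplication induced by that of A. If gr A is extremal, then A is a prime ring: for all a, b ∈ A, if a·x·b = 0 for every x ∈ A, then a = 0 or b = 0. -/

import Mathlib

open scoped ENNReal NNReal
open PowerSeries

noncomputable section

/-- The degree-`n` homogeneous component of the free algebra `k⟨X⟩`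
(standard grading: each generator has degree 1). -/
def freeDeg (k : Type) [Field k] (X : Type) (n : ℕ) : Submodule k (FreeAlgebra k X) :=
  (Submodule.span k (Set.range (FreeAlgebra.ι k)) : Submodule k (FreeAlgebra k X)) ^ n

/-- The two-sided ideal generated by a set `S`, as a `k`-submodule. -/
def idealGen (k : Type) [Field k] {A : Type} [Ring A] [Algebra k A] (S : Set A) :
    Submodule k A :=
  Submodule.span k {x : A | ∃ a b : A, ∃ s ∈ S, x = a * s * b}

/-- The dimension of the `n`-th component of the quotient of a graded algebra
(with components `𝒜`) by a homogeneous ideal `I`, i.e. `dim (𝒜 n / (I ∩ 𝒜 n))`. -/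
def quotDim (k : Type) [Field k] {A : Type} [Ring A] [Algebra k A]
    (𝒜 : ℕ → Submodule k A) (I : Submodule k A) (n : ℕ) : ℕ :=
  Module.finrank k (↥(𝒜 n) ⧸ (I.comap (𝒜 n).subtype))

/-- The radius of convergence of the power series `Σ a_n t^n`, as an element of `[0,∞]`. -/
def hradius (a : ℕ → ℝ) : ℝ≥0∞ :=
  ⨆ (r : ℝ≥0) (_ : Summable fun n => |a n| * (r : ℝ) ^ n), (r : ℝ≥0∞)

end
noncomputable section

/-- A `k`-submodule which is a two-sided ideal. -/
def IsTwoSidedSub {k A : Type} [Field k] [Ring A] [Algebra k A] (I : Submodule k A) : Prop :=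
  ∀ a : A, ∀ x ∈ I, a * x ∈ I ∧ x * a ∈ I

/-- A submodule is homogeneous (w.r.t. the grading `𝒜`) if it is closed under taking
homogeneous components. -/
def IsHomogSub {k A : Type} [Field k] [Ring A] [Algebra k A]
    (𝒜 : ℕ → Submodule k A) [GradedAlgebra 𝒜] (I : Submodule k A) : Prop :=
  ∀ x ∈ I, ∀ n, (DirectSum.decompose 𝒜 x n : A) ∈ I

/-- A graded algebra is extremal if every quotient by a nonzero homogeneous two-sided
ideal has strictly larger radius of convergence of its Hilbert series. -/
def Extremal {k A : Type} [Field k] [Ring A] [Algebra k A]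
    (𝒜 : ℕ → Submodule k A) [GradedAlgebra 𝒜] : Prop :=
  ∀ I : Submodule k A, IsTwoSidedSub I → IsHomogSub 𝒜 I → I ≠ ⊥ →
    hradius (fun n => (Module.finrank k (𝒜 n) : ℝ)) <
      hradius (fun n => (quotDim k 𝒜 I n : ℝ))

end

/-!
Let `a`, `b` be nonzero elements of `A` with `aAb = 0`; their symbols generate nonzero homogeneous
ideals `I`, `J` of the graded algebra `G = gr A` with `IJ = 0`, so it suffices that `G` is graded
prime.

If `c ∈ G_d` satisfies `cGc = 0`, the ideal `L = GcG` annihilates `c` from both sides, so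
`L_{m+d} = ∑_{i+j=m} G_i c G_j` is spanned by images of `(G/L)_i ⊗ (G/L)_j`. Hence
`G(t) ≤ (G/L)(t) + t^d (G/L)(t)^2` coefficientwise from degree `d` on, which forces
`r(G/L) ≤ r(G)`, so `c = 0` by extremality. As `(I ∩ J)^2 ⊆ IJ = 0`, this gives `I ∩ J = 0`, so
`G` embeds into `G/I × G/J` and `r(G) ≥ min (r(G/I)) (r(G/J))`, contradicting extremality again.
-/

open Finset.HasAntidiagonal (antidiagonal mem_antidiagonal)

section Radius

variable {a b : ℕ → ℝ}

theorem le_hradius {r : ℝ≥0} (h : Summable fun n => |a n| * (r : ℝ) ^ n) :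
    (r : ℝ≥0∞) ≤ hradius a :=
  le_iSup₂_of_le r h le_rfl

theorem summable_of_lt_hradius {r : ℝ≥0} (h : (r : ℝ≥0∞) < hradius a) :
    Summable fun n => |a n| * (r : ℝ) ^ n := by
  simp only [hradius, lt_iSup_iff] at h
  obtain ⟨s, hs, hrs⟩ := h
  have hrs' : (r : ℝ) ≤ s := mod_cast hrs.le
  exact hs.of_nonneg_of_le (fun n => by positivity) fun n => by gcongr

theorem hradius_anti (h : ∀ n, |a n| ≤ |b n|) : hradius b ≤ hradius a := by
  refine ENNReal.le_of_forall_nnreal_lt fun r hr => le_hradius ?_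
  exact (summable_of_lt_hradius hr).of_nonneg_of_le (fun n => by positivity) fun n =>
    mul_le_mul_of_nonneg_right (h n) (by positivity)

theorem min_hradius_le_hradius_add :
    min (hradius a) (hradius b) ≤ hradius fun n => a n + b n := by
  refine ENNReal.le_of_forall_nnreal_lt fun r hr => le_hradius ?_
  obtain ⟨ha, hb⟩ := lt_min_iff.1 hr
  refine ((summable_of_lt_hradius ha).add (summable_of_lt_hradius hb)).of_nonneg_of_le
    (fun n => by positivity) fun n => ?_
  rw [← add_mul]
  gcongr
  exact abs_add_le _ _

theorem min_hradius_le_hradius_antidiagonal :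
    min (hradius a) (hradius b) ≤
      hradius fun n => ∑ p ∈ antidiagonal n, a p.1 * b p.2 := by
  refine ENNReal.le_of_forall_nnreal_lt fun r hr => le_hradius ?_
  obtain ⟨ha, hb⟩ := lt_min_iff.1 hr
  have hprod := summable_norm_sum_mul_antidiagonal_of_summable_norm
    (summable_of_lt_hradius ha).norm (summable_of_lt_hradius hb).norm
  refine hprod.of_nonneg_of_le (fun n => by positivity) fun n => ?_
  calc |∑ p ∈ antidiagonal n, a p.1 * b p.2| * (r : ℝ) ^ n
      ≤ (∑ p ∈ antidiagonal n, |a p.1 * b p.2|) * (r : ℝ) ^ n := by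
        gcongr
        exact Finset.abs_sum_le_sum_abs _ _
    _ = ∑ p ∈ antidiagonal n, |a p.1| * (r : ℝ) ^ p.1 * (|b p.2| * (r : ℝ) ^ p.2) := by
        rw [Finset.sum_mul]
        refine Finset.sum_congr rfl fun p hp => ?_
        rw [← mem_antidiagonal.1 hp, abs_mul]
        ring
    _ ≤ _ := Real.le_norm_self _

theorem hradius_comp_add (a : ℕ → ℝ) (d : ℕ) : hradius (fun n => a (n + d)) = hradius a := by
  have summable_zero (b : ℕ → ℝ) : Summable fun n => |b n| * ((0 : ℝ≥0) : ℝ) ^ n :=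
    summable_of_ne_finset_zero (s := {0}) fun n hn => by simp [Finset.notMem_singleton.1 hn]
  have key (r : ℝ≥0) : (Summable fun n => |a (n + d)| * (r : ℝ) ^ n) ↔
      Summable fun n => |a n| * (r : ℝ) ^ n := by
    rcases eq_or_ne r 0 with rfl | hr
    · exact iff_of_true (summable_zero _) (summable_zero a)
    rw [← summable_nat_add_iff (f := fun n => |a n| * (r : ℝ) ^ n) d,
      ← summable_mul_right_iff (a := (r : ℝ) ^ d) (pow_ne_zero d (NNReal.coe_ne_zero.2 hr))]
    simp only [pow_add, mul_assoc]
  simp only [hradius, key]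

end Radius

section Dimension

variable {k V : Type*} [DivisionRing k] [AddCommGroup V] [Module k V]

theorem finrank_biSup_le {ι : Type*} (s : Finset ι) (W : ι → Submodule k V)
    [∀ i, FiniteDimensional k (W i)] :
    Module.finrank k (⨆ i ∈ s, W i : Submodule k V) ≤ ∑ i ∈ s, Module.finrank k (W i) := by
  classical
  rw [← Finset.sup_eq_iSup]
  induction s using Finset.induction_on with
  | empty => simp
  | insert i s hi ih =>
    rw [Finset.sup_insert, Finset.sum_insert hi]
    exact (Submodule.finrank_add_le_finrank_add_finrank _ _).trans (by gcongr)

theorem finrank_quotient_comap_add_finrank_inf (U L : Submodule k V) [FiniteDimensional k U] :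
    Module.finrank k (U ⧸ L.comap U.subtype) + Module.finrank k (U ⊓ L : Submodule k V) =
      Module.finrank k U := by
  rw [← Submodule.map_comap_subtype, Submodule.finrank_map_subtype_eq]
  exact Submodule.finrank_quotient_add_finrank _

theorem exists_le_sup_and_finrank_eq_finrank_quotient (U L : Submodule k V)
    [FiniteDimensional k U] :
    ∃ C ≤ U, U ≤ C ⊔ L ∧ Module.finrank k C = Module.finrank k (U ⧸ L.comap U.subtype) := by
  obtain ⟨C, hdisj, hsup⟩ :=
    IsModularLattice.exists_disjoint_and_sup_eq (inf_le_left : U ⊓ L ≤ U)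
  have hCU : C ≤ U := hsup ▸ le_sup_right
  have : FiniteDimensional k C := Submodule.finiteDimensional_of_le hCU
  refine ⟨C, hCU, ?_, ?_⟩
  · calc U = U ⊓ L ⊔ C := hsup.symm
      _ ≤ C ⊔ L := sup_le (inf_le_right.trans le_sup_right) le_sup_left
  · have hdim := Submodule.finrank_sup_add_finrank_inf_eq (U ⊓ L) C
    rw [hsup, hdisj.eq_bot, finrank_bot] at hdim
    have := finrank_quotient_comap_add_finrank_inf U L
    lia

end Dimension

section MulDimension

variable {k R : Type*} [Field k] [Ring R] [Algebra k R]

instance finiteDimensional_mul (U V : Submodule k R) [hU : FiniteDimensional k U]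
    [hV : FiniteDimensional k V] : FiniteDimensional k (U * V : Submodule k R) :=
  Module.Finite.iff_fg.2 ((Module.Finite.iff_fg.1 hU).mul (Module.Finite.iff_fg.1 hV))

theorem finrank_mul_le (U V : Submodule k R) [FiniteDimensional k U] [FiniteDimensional k V] :
    Module.finrank k (U * V : Submodule k R) ≤ Module.finrank k U * Module.finrank k V := by
  rw [← Submodule.mulMap_range, ← Module.finrank_tensorProduct]
  exact LinearMap.finrank_range_le _

theorem finrank_mul_mul_le_of_mul_eq_bot {L W : Submodule k R} (hLW : L * W = ⊥)
    (hWL : W * L = ⊥) (U V : Submodule k R) [FiniteDimensional k U] [FiniteDimensional k V]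
    [FiniteDimensional k W] :
    Module.finrank k (U * W * V : Submodule k R) ≤
      Module.finrank k (U ⧸ L.comap U.subtype) * Module.finrank k W *
        Module.finrank k (V ⧸ L.comap V.subtype) := by
  obtain ⟨C, hCU, hUC, hC⟩ := exists_le_sup_and_finrank_eq_finrank_quotient U L
  obtain ⟨D, hDV, hVD, hD⟩ := exists_le_sup_and_finrank_eq_finrank_quotient V L
  have : FiniteDimensional k C := Submodule.finiteDimensional_of_le hCU
  have : FiniteDimensional k D := Submodule.finiteDimensional_of_le hDV
  have hUW : U * W ≤ C * W := by
    calc U * W ≤ (C ⊔ L) * W := mul_le_mul_left hUC _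
      _ = C * W := by rw [Submodule.sup_mul, hLW, sup_bot_eq]
  have hWV : W * V ≤ W * D := by
    calc W * V ≤ W * (D ⊔ L) := mul_le_mul_right hVD _
      _ = W * D := by rw [Submodule.mul_sup, hWL, sup_bot_eq]
  have hle : U * W * V ≤ C * W * D := by
    calc U * W * V ≤ C * W * V := mul_le_mul_left hUW _
      _ = C * (W * V) := mul_assoc _ _ _
      _ ≤ C * (W * D) := mul_le_mul_right hWV _
      _ = C * W * D := (mul_assoc _ _ _).symm
  calc Module.finrank k (U * W * V : Submodule k R)
      ≤ Module.finrank k (C * W * D : Submodule k R) := Submodule.finrank_mono hle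
    _ ≤ Module.finrank k (C * W : Submodule k R) * Module.finrank k D := finrank_mul_le _ _
    _ ≤ Module.finrank k C * Module.finrank k W * Module.finrank k D := by
        gcongr
        exact finrank_mul_le _ _
    _ = _ := by rw [hC, hD]

end MulDimension

section Grading

theorem mul_span_mul_le_of_subset {k R ι : Type*} [CommSemiring k] [Semiring R] [Algebra k R]
    [AddCommMonoid ι] {𝒢 : ι → Submodule k R} [SetLike.GradedMul 𝒢] {S : Set R} {d : ι}
    (hS : S ⊆ 𝒢 d) (i j : ι) :
    𝒢 i * Submodule.span k S * 𝒢 j ≤ 𝒢 (i + j + d) := by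
  have hmul (m n : ι) : 𝒢 m * 𝒢 n ≤ 𝒢 (m + n) :=
    Submodule.mul_le.2 fun _ hx _ hy => SetLike.mul_mem_graded hx hy
  calc 𝒢 i * Submodule.span k S * 𝒢 j ≤ 𝒢 i * 𝒢 d * 𝒢 j := by
        gcongr
        exact Submodule.span_le.2 hS
    _ ≤ 𝒢 (i + d) * 𝒢 j := by
        gcongr
        exact hmul i d
    _ ≤ 𝒢 (i + j + d) := add_right_comm i d j ▸ hmul (i + d) j

variable {k M ι κ : Type*} [DecidableEq ι] [Semiring k] [AddCommMonoid M] [Module k M]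
  (ℳ : ι → Submodule k M) [DirectSum.Decomposition ℳ]

theorem decompose_mem_iSup_of_le {V : κ → Submodule k M} {deg : κ → ι}
    (hV : ∀ j, V j ≤ ℳ (deg j)) {x : M} (hx : x ∈ ⨆ j, V j) (i : ι) :
    (DirectSum.decompose ℳ x i : M) ∈ ⨆ (j) (_ : deg j = i), V j := by
  refine Submodule.iSup_induction V
    (motive := fun x => (DirectSum.decompose ℳ x i : M) ∈ ⨆ (j) (_ : deg j = i), V j)
    hx (fun j x hx => ?_) (by simp) fun x y hx hy => ?_
  · by_cases hij : deg j = i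
    · subst hij
      rw [DirectSum.decompose_of_mem_same ℳ (hV j hx)]
      exact Submodule.mem_iSup_of_mem j (Submodule.mem_iSup_of_mem rfl hx)
    · rw [DirectSum.decompose_of_mem_ne ℳ (hV j hx) hij]
      exact zero_mem _
  · rw [DirectSum.decompose_add]
    exact add_mem hx hy

end Grading

section IdealGen

variable {k R : Type} [Field k] [Ring R] [Algebra k R] {S T : Set R}

theorem subset_idealGen : S ⊆ idealGen k S := fun s hs =>
  Submodule.subset_span ⟨1, 1, s, hs, by simp⟩

theorem isTwoSidedSub_idealGen (S : Set R) : IsTwoSidedSub (idealGen k S) := by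
  intro g x hx
  induction hx using Submodule.span_induction with
  | mem x hx =>
    obtain ⟨a, b, s, hs, rfl⟩ := hx
    exact ⟨Submodule.subset_span ⟨g * a, b, s, hs, by simp only [mul_assoc]⟩,
      Submodule.subset_span ⟨a, b * g, s, hs, by simp only [mul_assoc]⟩⟩
  | zero => simp
  | add x y _ _ hx hy =>
    rw [mul_add, add_mul]
    exact ⟨add_mem hx.1 hy.1, add_mem hx.2 hy.2⟩
  | smul r x _ hx =>
    rw [mul_smul_comm, smul_mul_assoc]
    exact ⟨Submodule.smul_mem _ r hx.1, Submodule.smul_mem _ r hx.2⟩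

theorem idealGen_mul_idealGen_eq_bot (h : ∀ s ∈ S, ∀ t ∈ T, ∀ g, s * g * t = 0) :
    idealGen k S * idealGen k T = ⊥ := by
  rw [idealGen, idealGen, Submodule.span_mul_span, Submodule.span_eq_bot]
  rintro _ ⟨_, ⟨a, b, s, hs, rfl⟩, _, ⟨a', b', t, ht, rfl⟩, rfl⟩
  calc a * s * b * (a' * t * b') = a * (s * (b * a') * t) * b' := by simp only [mul_assoc]
    _ = 0 := by rw [h s hs t ht, mul_zero, zero_mul]

theorem idealGen_eq_top_mul_span_mul_top (S : Set R) :
    idealGen k S = ⊤ * Submodule.span k S * ⊤ := by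
  rw [← Submodule.span_univ, Submodule.span_mul_span, Submodule.span_mul_span, idealGen]
  congr 1
  ext x
  simp only [Set.mem_mul, Set.mem_univ, true_and, Set.mem_ofPred_eq]
  grind

variable (𝒢 : ℕ → Submodule k R) [GradedAlgebra 𝒢]

theorem idealGen_eq_iSup (S : Set R) :
    idealGen k S = ⨆ p : ℕ × ℕ, 𝒢 p.1 * Submodule.span k S * 𝒢 p.2 := by
  rw [idealGen_eq_top_mul_span_mul_top,
    ← (DirectSum.Decomposition.isInternal 𝒢).submodule_iSup_eq_top]
  simp only [Submodule.iSup_mul, Submodule.mul_iSup, iSup_prod]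
  exact iSup_comm

variable {𝒢} {d : ℕ}

theorem decompose_mem_iSup_of_mem_idealGen (hS : S ⊆ 𝒢 d) {x : R} (hx : x ∈ idealGen k S)
    (n : ℕ) :
    (DirectSum.decompose 𝒢 x n : R) ∈
      ⨆ (p : ℕ × ℕ) (_ : p.1 + p.2 + d = n), 𝒢 p.1 * Submodule.span k S * 𝒢 p.2 := by
  rw [idealGen_eq_iSup 𝒢] at hx
  exact decompose_mem_iSup_of_le 𝒢
    (fun p : ℕ × ℕ => mul_span_mul_le_of_subset hS p.1 p.2) hx n

theorem isHomogSub_idealGen (hS : S ⊆ 𝒢 d) : IsHomogSub 𝒢 (idealGen k S) := by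
  intro x hx n
  rw [idealGen_eq_iSup 𝒢]
  exact SetLike.le_def.1 (iSup₂_le_iSup _ _) (decompose_mem_iSup_of_mem_idealGen hS hx n)

theorem inf_idealGen_le (hS : S ⊆ 𝒢 d) (m : ℕ) :
    𝒢 (m + d) ⊓ idealGen k S ≤
      ⨆ p ∈ antidiagonal m, 𝒢 p.1 * Submodule.span k S * 𝒢 p.2 := by
  rintro x ⟨hx𝒢, hx⟩
  have hdec := decompose_mem_iSup_of_mem_idealGen hS hx (m + d)
  rw [DirectSum.decompose_of_mem_same 𝒢 hx𝒢] at hdec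
  simpa only [add_left_inj, mem_antidiagonal] using hdec

end IdealGen

section QuotDim

variable {k G : Type} [Field k] [Ring G] [Algebra k G] {𝒢 : ℕ → Submodule k G}

theorem finrank_le_quotDim_add_quotDim {I J : Submodule k G} {n : ℕ}
    [FiniteDimensional k (𝒢 n)] (h : 𝒢 n ⊓ (I ⊓ J) = ⊥) :
    Module.finrank k (𝒢 n) ≤ quotDim k 𝒢 I n + quotDim k 𝒢 J n := by
  have hI : quotDim k 𝒢 I n + _ = _ := finrank_quotient_comap_add_finrank_inf (𝒢 n) I
  have hJ : quotDim k 𝒢 J n + _ = _ := finrank_quotient_comap_add_finrank_inf (𝒢 n) J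
  have hIJ := Submodule.finrank_sup_add_finrank_inf_eq (𝒢 n ⊓ I) (𝒢 n ⊓ J)
  have hsup : Module.finrank k (𝒢 n ⊓ I ⊔ 𝒢 n ⊓ J : Submodule k G) ≤ Module.finrank k (𝒢 n) :=
    Submodule.finrank_mono (sup_le inf_le_left inf_le_left)
  rw [← inf_inf_distrib_left, h, finrank_bot] at hIJ
  lia

theorem finrank_le_quotDim_add_sum_antidiagonal [GradedAlgebra 𝒢]
    [∀ i, FiniteDimensional k (𝒢 i)] {c : G} {d : ℕ} (hc : c ∈ 𝒢 d)
    (hcc : ∀ g, c * g * c = 0) (m : ℕ) :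
    Module.finrank k (𝒢 (m + d)) ≤ quotDim k 𝒢 (idealGen k {c}) (m + d) +
      ∑ p ∈ antidiagonal m,
        quotDim k 𝒢 (idealGen k {c}) p.1 * quotDim k 𝒢 (idealGen k {c}) p.2 := by
  set L := idealGen k {c}
  set W := Submodule.span k {c}
  have hW_le : W ≤ L := Submodule.span_le.2 subset_idealGen
  have hLL : L * L = ⊥ := idealGen_mul_idealGen_eq_bot (by simpa using hcc)
  have hLW : L * W = ⊥ := eq_bot_mono (mul_le_mul_right hW_le _) hLL
  have hWL : W * L = ⊥ := eq_bot_mono (mul_le_mul_left hW_le _) hLL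
  have hW : Module.finrank k W ≤ 1 := by
    simpa using finrank_span_le_card (R := k) ({c} : Set G)
  have hterm (p : ℕ × ℕ) : Module.finrank k (𝒢 p.1 * W * 𝒢 p.2 : Submodule k G) ≤
      quotDim k 𝒢 L p.1 * quotDim k 𝒢 L p.2 := by
    calc _ ≤ quotDim k 𝒢 L p.1 * Module.finrank k W * quotDim k 𝒢 L p.2 :=
          finrank_mul_mul_le_of_mul_eq_bot hLW hWL _ _
      _ ≤ quotDim k 𝒢 L p.1 * 1 * quotDim k 𝒢 L p.2 := by gcongr
      _ = _ := by rw [mul_one]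
  have hfd : FiniteDimensional k
      (⨆ p ∈ antidiagonal m, 𝒢 p.1 * W * 𝒢 p.2 : Submodule k G) := by
    rw [← Finset.sup_eq_iSup]
    exact Submodule.finiteDimensional_finset_sup _ _
  rw [← finrank_quotient_comap_add_finrank_inf (𝒢 (m + d)) L]
  refine Nat.add_le_add_left ?_ _
  calc Module.finrank k (𝒢 (m + d) ⊓ L : Submodule k G)
      ≤ Module.finrank k (⨆ p ∈ antidiagonal m, 𝒢 p.1 * W * 𝒢 p.2 : Submodule k G) :=
        Submodule.finrank_mono (inf_idealGen_le (Set.singleton_subset_iff.2 hc) m)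
    _ ≤ ∑ p ∈ antidiagonal m, Module.finrank k (𝒢 p.1 * W * 𝒢 p.2 : Submodule k G) :=
        finrank_biSup_le _ fun p : ℕ × ℕ => 𝒢 p.1 * W * 𝒢 p.2
    _ ≤ _ := Finset.sum_le_sum fun p _ => hterm p

end QuotDim

/-- A graded algebra is graded prime if `aGb = 0` forces `a = 0` or `b = 0` for homogeneous
`a`, `b`; this is the form of primeness that passes from an associated graded algebra to the
filtered algebra through symbols. -/
def IsGradedPrime {k G ι : Type*} [CommSemiring k] [Semiring G] [Algebra k G]
    (𝒢 : ι → Submodule k G) : Prop :=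
  ∀ a b : G, SetLike.IsHomogeneousElem 𝒢 a → SetLike.IsHomogeneousElem 𝒢 b →
    (∀ g, a * g * b = 0) → a = 0 ∨ b = 0

section Extremal

variable {k G : Type} [Field k] [Ring G] [Algebra k G] {𝒢 : ℕ → Submodule k G} [GradedAlgebra 𝒢]

theorem Extremal.hradius_lt_hradius_idealGen (hext : Extremal 𝒢) {c : G} {d : ℕ} (hc : c ∈ 𝒢 d)
    (hc0 : c ≠ 0) :
    hradius (fun n => (Module.finrank k (𝒢 n) : ℝ)) <
      hradius (fun n => (quotDim k 𝒢 (idealGen k {c}) n : ℝ)) := by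
  refine hext _ (isTwoSidedSub_idealGen {c}) (isHomogSub_idealGen (Set.singleton_subset_iff.2 hc))
    fun hbot => hc0 ?_
  rw [← Submodule.mem_bot k, ← hbot]
  exact subset_idealGen (Set.mem_singleton c)

variable [∀ i, FiniteDimensional k (𝒢 i)]

theorem Extremal.eq_zero_of_mul_mul_self_eq_zero (hext : Extremal 𝒢) {c : G} {d : ℕ}
    (hc : c ∈ 𝒢 d) (hcc : ∀ g, c * g * c = 0) : c = 0 := by
  by_contra hc0
  set g : ℕ → ℝ := fun n => Module.finrank k (𝒢 n)
  set q : ℕ → ℝ := fun n => quotDim k 𝒢 (idealGen k {c}) n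
  have hgq (m : ℕ) : g (m + d) ≤ q (m + d) + ∑ p ∈ antidiagonal m, q p.1 * q p.2 := by
    simp only [g, q]
    exact mod_cast finrank_le_quotDim_add_sum_antidiagonal hc hcc m
  refine (hext.hradius_lt_hradius_idealGen hc hc0).not_ge ?_
  calc hradius q
      ≤ min (hradius fun m => q (m + d))
          (hradius fun m => ∑ p ∈ antidiagonal m, q p.1 * q p.2) :=
        le_min (hradius_comp_add q d).ge ((min_self _).ge.trans min_hradius_le_hradius_antidiagonal)
    _ ≤ hradius fun m => q (m + d) + ∑ p ∈ antidiagonal m, q p.1 * q p.2 :=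
        min_hradius_le_hradius_add
    _ ≤ hradius fun m => g (m + d) :=
        hradius_anti fun m => abs_le_abs_of_nonneg (Nat.cast_nonneg _) (hgq m)
    _ = hradius g := hradius_comp_add g d

theorem Extremal.isGradedPrime (hext : Extremal 𝒢) : IsGradedPrime 𝒢 := by
  rintro a b ⟨d, ha⟩ ⟨e, hb⟩ hab
  by_contra! hne
  set I := idealGen k {a}
  set J := idealGen k {b}
  have hIJ : I * J = ⊥ := idealGen_mul_idealGen_eq_bot (by simpa using hab)
  have hdisj (n : ℕ) : 𝒢 n ⊓ (I ⊓ J) = ⊥ := by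
    refine (Submodule.eq_bot_iff _).2 fun c ⟨hcn, hcI, hcJ⟩ => ?_
    refine hext.eq_zero_of_mul_mul_self_eq_zero hcn fun g => ?_
    rw [← Submodule.mem_bot k, ← hIJ]
    exact Submodule.mul_mem_mul (isTwoSidedSub_idealGen {a} g c hcI).2 hcJ
  refine (lt_min (hext.hradius_lt_hradius_idealGen ha hne.1)
    (hext.hradius_lt_hradius_idealGen hb hne.2)).not_ge (min_hradius_le_hradius_add.trans ?_)
  refine hradius_anti fun n => abs_le_abs_of_nonneg (Nat.cast_nonneg _) ?_
  exact mod_cast finrank_le_quotDim_add_quotDim (hdisj n)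

end Extremal

section Filtration

variable {k A G : Type*} [CommSemiring k] [Semiring A] [Algebra k A] [Semiring G] [Algebra k G]
  {F : ℕ → Submodule k A} {𝒢 : ℕ → Submodule k G} {φ : ∀ i, F i →ₗ[k] 𝒢 i}

theorem exists_mem_map_ne_zero (hexh : ∀ a : A, ∃ i, a ∈ F i)
    (hker0 : ∀ x : F 0, φ 0 x = 0 ↔ (x : A) = 0)
    (hkerS : ∀ i (x : F (i + 1)), φ (i + 1) x = 0 ↔ (x : A) ∈ F i) {a : A} (ha : a ≠ 0) :
    ∃ i, ∃ h : a ∈ F i, (φ i ⟨a, h⟩ : G) ≠ 0 := by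
  classical
  have hmem : a ∈ F (Nat.find (hexh a)) := Nat.find_spec (hexh a)
  have hmin (m : ℕ) (hm : m < Nat.find (hexh a)) : a ∉ F m := Nat.find_min (hexh a) hm
  refine ⟨_, hmem, fun h => ?_⟩
  rw [ZeroMemClass.coe_eq_zero] at h
  generalize Nat.find (hexh a) = i at hmem hmin h
  cases i with
  | zero => exact ha ((hker0 _).1 h)
  | succ i => exact hmin i i.lt_succ_self ((hkerS i _).1 h)

theorem IsGradedPrime.eq_zero_or_eq_zero_of_filtration [GradedAlgebra 𝒢] (hprime : IsGradedPrime 𝒢)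
    (hmul : ∀ i j, F i * F j ≤ F (i + j)) (hexh : ∀ a : A, ∃ i, a ∈ F i)
    (hsurj : ∀ i, Function.Surjective (φ i))
    (hker0 : ∀ x : F 0, φ 0 x = 0 ↔ (x : A) = 0)
    (hkerS : ∀ i (x : F (i + 1)), φ (i + 1) x = 0 ↔ (x : A) ∈ F i)
    (hφmul : ∀ i j (x : F i) (y : F j),
      (φ (i + j) ⟨x * y, hmul i j (Submodule.mul_mem_mul x.2 y.2)⟩ : G) = φ i x * φ j y)
    {a b : A} (hab : ∀ x, a * x * b = 0) : a = 0 ∨ b = 0 := by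
  by_contra! hne
  obtain ⟨i, hai, hi⟩ := exists_mem_map_ne_zero hexh hker0 hkerS hne.1
  obtain ⟨j, hbj, hj⟩ := exists_mem_map_ne_zero hexh hker0 hkerS hne.2
  refine (hprime _ _ ⟨i, (φ i ⟨a, hai⟩).2⟩ ⟨j, (φ j ⟨b, hbj⟩).2⟩ fun g => ?_).elim hi hj
  induction g using DirectSum.Decomposition.inductionOn 𝒢 with
  | zero => simp
  | add g g' hg hg' => rw [mul_add, add_mul, hg, hg', add_zero]
  | @homogeneous n g =>
    obtain ⟨x, rfl⟩ := hsurj n g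
    rw [← hφmul, ← hφmul, ZeroMemClass.coe_eq_zero]
    exact (congrArg _ (Subtype.ext (hab x))).trans (map_zero _)

end Filtration

/-- **Corollary 5.5**: let `A` be an algebra with an exhaustive increasing filtration
`F_0 ⊆ F_1 ⊆ ⋯` by finite-dimensional subspaces with `1 ∈ F_0` and `F_i·F_j ⊆ F_{i+j}`.
If the associated graded algebra `gr A` (here encoded as a graded algebra `G` together
with the canonical surjections `φ_i : F_i → G_i` with kernel `F_{i-1}`, compatible with
multiplication and units) is extremal, then `A` is prime. -/
theorem stmt11 {k A G : Type} [Field k] [Ring A] [Algebra k A] [Ring G] [Algebra k G]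
    (F : ℕ → Submodule k A)
    (hmono : Monotone F)
    (hone : (1 : A) ∈ F 0)
    (hmul : ∀ i j, F i * F j ≤ F (i + j))
    (hexh : ∀ a : A, ∃ i, a ∈ F i)
    (hfd : ∀ i, FiniteDimensional k (F i))
    (𝒢 : ℕ → Submodule k G) [GradedAlgebra 𝒢]
    [hgfd : ∀ i, FiniteDimensional k (𝒢 i)]
    (φ : ∀ i, F i →ₗ[k] 𝒢 i)
    (hsurj : ∀ i, Function.Surjective (φ i))
    (hker0 : ∀ x : F 0, φ 0 x = 0 ↔ (x : A) = 0)
    (hkerS : ∀ i (x : F (i + 1)), φ (i + 1) x = 0 ↔ (x : A) ∈ F i)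
    (hφone : ((φ 0 ⟨1, hone⟩ : 𝒢 0) : G) = 1)
    (hφmul : ∀ i j (x : F i) (y : F j),
      ((φ (i + j) ⟨(x : A) * (y : A),
          hmul i j (Submodule.mul_mem_mul x.2 y.2)⟩ : 𝒢 (i + j)) : G) =
        ((φ i x : 𝒢 i) : G) * ((φ j y : 𝒢 j) : G))
    (hext : Extremal 𝒢) :
    ∀ a b : A, (∀ x : A, a * x * b = 0) → a = 0 ∨ b = 0 := by
  intro a b hab
  exact hext.isGradedPrime.eq_zero_or_eq_zero_of_filtration hmul hexh hsurj hker0 hkerS hφmul hab
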